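/- If w_1 > w_2 > … > w_n > 0, then the generalized Gini index G_w is strictly increasing under Pigou–Dalton transfers: for every v ∈ ℝ^n with v_i < v_j and every ε ∈ (0, v_j − v_i), G_w(v + ε·1_i − ε·1_j) > G_w(v), where 1_i denotes the i-th canonical basis vector of ℝ^n. -/

import Mathlib

/-- The vector `v` rearranged in nondecreasing order. -/
noncomputable def sortedVec {n : ℕ} (v : Fin n → ℝ) : Fin n → ℝ := v ∘ Tuple.sort v

/-- Ordered weighted average: `OWA_w(v) = ∑ₖ w_k v↑_k`. -/
noncomputable def OWA {n : ℕ} (w v : Fin n → ℝ) : ℝ := ∑ k, w k * sortedVec v k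

/-- `Lorenz v k` is the k-th Lorenz component, the sum of the k smallest components of v. -/
noncomputable def Lorenz {n : ℕ} (v : Fin n → ℝ) (k : ℕ) : ℝ :=
  ∑ i : Fin n, if (i : ℕ) < k then sortedVec v i else 0

/-- `wprime w k = w_k - w_{k+1}` with the convention `w_{n+1} = 0` (0-indexed). -/
noncomputable def wprime {n : ℕ} (w : Fin n → ℝ) (k : Fin n) : ℝ :=
  w k - (if h : (k : ℕ) + 1 < n then w ⟨(k : ℕ) + 1, h⟩ else 0)

lemma OWA_le_perm {n : ℕ} (w : Fin n → ℝ) (hw : StrictAnti w) (v : Fin n → ℝ)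
    (σ : Equiv.Perm (Fin n)) : OWA w v ≤ ∑ k, w k * v (σ k) := by
  have hm := Tuple.monotone_sort v
  have ha : Antivary w (v ∘ Tuple.sort v) := hw.antitone.antivary hm
  have h := ha.sum_mul_le_sum_mul_comp_perm (σ := σ.trans (Tuple.sort v).symm)
  simpa [OWA, sortedVec] using h

lemma sum_transfer {n : ℕ} (w x : Fin n → ℝ) (σ : Equiv.Perm (Fin n)) (p q : Fin n) (c : ℝ) :
    ∑ k, w k * (x (σ k) + (if σ k = p then c else 0) - (if σ k = q then c else 0)) =
      ∑ k, w k * x (σ k) + c * (w (σ.symm p) - w (σ.symm q)) := by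
  simp only [mul_sub, mul_add, Finset.sum_sub_distrib, Finset.sum_add_distrib, mul_ite, mul_zero,
    ← Equiv.eq_symm_apply, Finset.sum_ite_eq', Finset.sum_ite_eq, Finset.mem_univ, if_true]
  ring

/-- for strictly decreasing positive weights, the generalized Gini index
`G_w = OWA_w` strictly increases under any Pigou–Dalton transfer. -/
theorem stmt4 {n : ℕ} (w : Fin n → ℝ) (hw : StrictAnti w) (hwpos : ∀ k, 0 < w k)
    (v : Fin n → ℝ) (i j : Fin n) (hij : v i < v j)
    (ε : ℝ) (hε0 : 0 < ε) (hε1 : ε < v j - v i) :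
    OWA w v < OWA w (fun t => v t + (if t = i then ε else 0) - (if t = j then ε else 0)) := by
  set u : Fin n → ℝ := fun t => v t + (if t = i then ε else 0) - (if t = j then ε else 0) with hu
  set τ := Tuple.sort u with hτ
  have hne : i ≠ j := by rintro rfl; exact lt_irrefl _ hij
  have hO : OWA w u = ∑ k, w k * u (τ k) := rfl
  rw [hO]
  rcases lt_or_gt_of_ne (fun h => hne (τ.symm.injective h) : τ.symm i ≠ τ.symm j) with h | h
  · have h1 := OWA_le_perm w hw v τ
    have h2 := sum_transfer w v τ i j ε
    have h3 := mul_pos hε0 (sub_pos.2 (hw h))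
    simp only [hu]
    linarith
  · have h1 := OWA_le_perm w hw v (τ.trans (Equiv.swap i j))
    have h2 := sum_transfer w (fun t => v (Equiv.swap i j t)) τ j i (v j - v i - ε)
    have h3 := mul_pos (show 0 < v j - v i - ε by linarith) (sub_pos.2 (hw h))
    have h4 : ∀ t, u t = v (Equiv.swap i j t) + (if t = j then (v j - v i - ε) else 0)
        - (if t = i then (v j - v i - ε) else 0) := by
      intro t
      simp only [hu]
      by_cases hi : t = i
      · subst hi; simp [hne]; ring
      · by_cases hj : t = j
        · subst hj; simp [hne.symm]; ring
        · simp [hi, hj, Equiv.swap_apply_of_ne_of_ne hi hj]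
    simp only [h4]
    simp only [Equiv.trans_apply] at h1
    linarith
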